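/- arXiv:1602.02859 — 3 statements merged into one kernel-verified Lean document; each statement's English description precedes it below -/
import Mathlib

section
/- Let n ≥ 1, 1 ≤ q, q₁, q₂ ≤ ∞ and s, s₁, s₂ ∈ ℝ. If the discrete weighted Young inequality l(q₁,s₁) ∗ l(q₂,s₂) ⊂ l(q,s) holds (there is a constant C with ‖a∗b‖_{l(q,s)} ≤ C‖a‖_{l(q₁,s₁)}‖b‖_{l(q₂,s₂)} for all nonnegative sequences a, b), then 1 + max(1/q + s/n, 0) ≤ max(1/q₁ + s₁/n, 0) + max(1/q₂ + s₂/n, 0). -/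
/-!
The inequality is tested on `a = b = 1_{Q}`, where `Q` is the cube `|kᵢ| ≤ 2N`, and `N → ∞`.
On `[0, 2N]ⁿ` the convolution is at least `Nⁿ` (`le_dconv_cube`), and the `l(q, s)` norm of the
indicator of `[0, 2N]ⁿ` is at least a constant times `N ^ (n * max (1/q + s/n) 0)`: the origin
gives the exponent `0` and the subcube `[N, 2N]ⁿ` gives the exponent `n/q + s`
(`le_lns_dconv_cube`). Conversely the `l(p, r)` norm of `1_Q` is `O(N ^ t)` for every `t ≥ 0` with
`t > n/p + r`, since `1_Q(k) ≲ N ^ t * ⟨k⟩ ^ (-t)` and the latter has finite norm (`lns_cube_le`).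
Comparing powers of `N` gives the claim up to an arbitrarily small error in the exponents.
-/

open scoped ENNReal NNReal BigOperators
open MeasureTheory

noncomputable section

/-- `1/q` for `q ∈ [0,∞]`, with the convention `1/∞ = 0`. -/
def iv (q : ℝ≥0∞) : ℝ := q⁻¹.toReal

/-- The dual exponent `q'` of `q ∈ [1,∞]`, defined by `1/q + 1/q' = 1`. -/
def dualExp (q : ℝ≥0∞) : ℝ≥0∞ :=
  if q = ∞ then 1 else if q = 1 then ∞ else ENNReal.ofReal (q.toReal / (q.toReal - 1))

/-- Euclidean norm `|k|` of an integer vector `k ∈ ℤⁿ`. -/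
def znorm {n : ℕ} (k : Fin n → ℤ) : ℝ := Real.sqrt (∑ i, ((k i : ℝ)) ^ 2)

/-- Japanese bracket `⟨k⟩ = (1+|k|²)^{1/2}` of an integer vector. -/
def zbr {n : ℕ} (k : Fin n → ℤ) : ℝ := Real.sqrt (1 + ∑ i, ((k i : ℝ)) ^ 2)

/-- Euclidean norm `|x|` on `ℝⁿ` (realized as `Fin n → ℝ`). -/
def rnorm {n : ℕ} (x : Fin n → ℝ) : ℝ := Real.sqrt (∑ i, (x i) ^ 2)

/-- Japanese bracket `⟨x⟩ = (1+|x|²)^{1/2}` on `ℝⁿ`. -/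
def rbr {n : ℕ} (x : Fin n → ℝ) : ℝ := Real.sqrt (1 + ∑ i, (x i) ^ 2)

/-- The weighted norm `‖a‖_{l(q,s)}` (weight `⟨k⟩^s`) of a nonnegative sequence on `ℤⁿ`,
valued in `ℝ≥0∞`.  For `q = ∞` it is `sup_k a_k ⟨k⟩^s`, otherwise
`(∑_k (a_k ⟨k⟩^s)^q)^{1/q}`. -/
def lns (n : ℕ) (q : ℝ≥0∞) (s : ℝ) (a : (Fin n → ℤ) → ℝ≥0∞) : ℝ≥0∞ :=
  if q = ∞ then ⨆ k, a k * ENNReal.ofReal (zbr k ^ s)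
  else (∑' k, (a k * ENNReal.ofReal (zbr k ^ s)) ^ q.toReal) ^ (1 / q.toReal)

/-- Convolution of (nonnegative) sequences on `ℤⁿ`: `(a∗b)(k) = ∑_j a_{k-j} b_j`. -/
def dconv {n : ℕ} (a b : (Fin n → ℤ) → ℝ≥0∞) : (Fin n → ℤ) → ℝ≥0∞ :=
  fun k => ∑' j, a (k - j) * b j

/-- The weighted norm `‖f‖_{L(q,s)}` (weight `⟨x⟩^s`) of a nonnegative function on `ℝⁿ`.
For `q = ∞` it is `ess sup_x f(x) ⟨x⟩^s`, otherwise `(∫ (f(x) ⟨x⟩^s)^q dx)^{1/q}`. -/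
def Lns (n : ℕ) (q : ℝ≥0∞) (s : ℝ) (f : (Fin n → ℝ) → ℝ≥0∞) : ℝ≥0∞ :=
  if q = ∞ then essSup (fun x => f x * ENNReal.ofReal (rbr x ^ s)) volume
  else (∫⁻ x, (f x * ENNReal.ofReal (rbr x ^ s)) ^ q.toReal) ^ (1 / q.toReal)

/-- The power-weighted norm `‖f‖_{𝕃(q,s)}` (weight `|x|^s`) of a nonnegative function on `ℝⁿ`. -/
def Pns (n : ℕ) (q : ℝ≥0∞) (s : ℝ) (f : (Fin n → ℝ) → ℝ≥0∞) : ℝ≥0∞ :=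
  if q = ∞ then essSup (fun x => f x * ENNReal.ofReal (rnorm x ^ s)) volume
  else (∫⁻ x, (f x * ENNReal.ofReal (rnorm x ^ s)) ^ q.toReal) ^ (1 / q.toReal)

/-- Convolution of (nonnegative) functions on `ℝⁿ`: `(f∗g)(x) = ∫ f(x-y) g(y) dy`. -/
def cconv {n : ℕ} (f g : (Fin n → ℝ) → ℝ≥0∞) : (Fin n → ℝ) → ℝ≥0∞ :=
  fun x => ∫⁻ y, f (x - y) * g y

/-- The discrete fractional integral operator `(𝓘_λ a)(k) = ∑_{j ≠ k} a_j / |k-j|^{n-λ}`. -/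
def dRiesz (n : ℕ) (lam : ℝ) (a : (Fin n → ℤ) → ℝ≥0∞) : (Fin n → ℤ) → ℝ≥0∞ :=
  fun k => ∑' j, if j = k then 0 else a j * ENNReal.ofReal (znorm (k - j) ^ (lam - (n : ℝ)))

/-- The Riesz potential `(I_λ f)(x) = ∫ f(y) / |x-y|^{n-λ} dy`. -/
def cRiesz (n : ℕ) (lam : ℝ) (f : (Fin n → ℝ) → ℝ≥0∞) : (Fin n → ℝ) → ℝ≥0∞ :=
  fun x => ∫⁻ y, f y * ENNReal.ofReal (rnorm (x - y) ^ (lam - (n : ℝ)))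

/-- Condition `𝒜₁`. -/
def condA1 (n : ℕ) (q q₁ q₂ : ℝ≥0∞) (s s₁ s₂ : ℝ) : Prop :=
  s ≤ s₁ ∧ s ≤ s₂ ∧ 0 ≤ s₁ + s₂ ∧
  1 + max (iv q + s / (n : ℝ)) 0 < max (iv q₁ + s₁ / (n : ℝ)) 0 + max (iv q₂ + s₂ / (n : ℝ)) 0 ∧
  iv q + s / (n : ℝ) ≤ iv q₁ + s₁ / (n : ℝ) ∧
  iv q + s / (n : ℝ) ≤ iv q₂ + s₂ / (n : ℝ) ∧
  1 ≤ iv q₁ + s₁ / (n : ℝ) + iv q₂ + s₂ / (n : ℝ) ∧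
  (iv q + s / (n : ℝ) = iv q₁ + s₁ / (n : ℝ) → q = q₁ ∧ s = s₁) ∧
  (iv q + s / (n : ℝ) = iv q₂ + s₂ / (n : ℝ) → q = q₂ ∧ s = s₂) ∧
  (1 = iv q₁ + s₁ / (n : ℝ) + iv q₂ + s₂ / (n : ℝ) → dualExp q₁ = q₂ ∧ -s₁ = s₂)

/-- Condition `𝒜₂`. -/
def condA2 (q q₁ q₂ : ℝ≥0∞) (s s₁ s₂ : ℝ) : Prop :=
  s = 0 ∧ s₁ = 0 ∧ s₂ = 0 ∧
  ((q = q₁ ∧ q₂ = 1) ∨ (q = q₂ ∧ q₁ = 1) ∨ (q = ∞ ∧ iv q₁ + iv q₂ = 1))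

/-- Condition `𝒜₃`. -/
def condA3 (n : ℕ) (q q₁ q₂ : ℝ≥0∞) (s s₁ s₂ : ℝ) : Prop :=
  s ≤ s₁ ∧ s ≤ s₂ ∧ iv q₁ + iv q₂ = 1 ∧ s₁ + s₂ = 0 ∧
  iv q + s / (n : ℝ) < 0 ∧ 0 ≤ iv q₁ + s₁ / (n : ℝ) ∧ 0 ≤ iv q₂ + s₂ / (n : ℝ)

/-- Condition `𝒜₄`. -/
def condA4 (n : ℕ) (q q₁ q₂ : ℝ≥0∞) (s s₁ s₂ : ℝ) : Prop :=
  s ≤ s₁ ∧ s ≤ s₂ ∧ 0 ≤ s₁ + s₂ ∧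
  1 + (iv q + s / (n : ℝ)) = iv q₁ + s₁ / (n : ℝ) + iv q₂ + s₂ / (n : ℝ) ∧
  iv q ≤ iv q₁ + iv q₂ ∧
  iv q + s / (n : ℝ) < iv q₁ + s₁ / (n : ℝ) ∧
  iv q + s / (n : ℝ) < iv q₂ + s₂ / (n : ℝ) ∧
  0 < iv q + s / (n : ℝ) ∧
  ((s = s₁ ∨ s = s₂) → q ≠ ∞ ∧ q₁ ≠ 1 ∧ q₂ ≠ 1)

/-- Condition `𝒞₁`. -/
def condC1 (n : ℕ) (lam : ℝ) (q p : ℝ≥0∞) (s t : ℝ) : Prop :=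
  s ≤ t ∧
  lam / (n : ℝ) + max (iv q + s / (n : ℝ)) 0 < max (iv p + t / (n : ℝ)) 0 ∧
  lam / (n : ℝ) + iv q + s / (n : ℝ) ≤ 1 ∧
  (lam / (n : ℝ) + iv q + s / (n : ℝ) = 1 → q = ∞ ∧ s = (n : ℝ) - lam)

/-- Condition `𝒞₃`. -/
def condC3 (n : ℕ) (lam : ℝ) (q p : ℝ≥0∞) (s t : ℝ) : Prop :=
  s ≤ t ∧ p = 1 ∧ t = lam - (n : ℝ) ∧ iv q + s / (n : ℝ) < 0

/-- Condition `𝒞₄`. -/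
def condC4 (n : ℕ) (lam : ℝ) (q p : ℝ≥0∞) (s t : ℝ) : Prop :=
  s ≤ t ∧
  lam / (n : ℝ) + iv q + s / (n : ℝ) = iv p + t / (n : ℝ) ∧
  iv q ≤ iv p ∧
  0 < iv q + s / (n : ℝ) ∧
  iv p + t / (n : ℝ) < 1 ∧
  (s = t → q ≠ ∞ ∧ p ≠ 1)

end

/-! ### The bracket on the integer lattice -/

theorem one_le_zbr {n : ℕ} (k : Fin n → ℤ) : 1 ≤ zbr k := by
  unfold zbr
  rw [Real.one_le_sqrt]
  have : 0 ≤ ∑ i, ((k i : ℝ)) ^ 2 := Finset.sum_nonneg fun i _ => sq_nonneg _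
  linarith

theorem abs_le_zbr {n : ℕ} (k : Fin n → ℤ) (i : Fin n) : |(k i : ℝ)| ≤ zbr k := by
  unfold zbr
  apply Real.abs_le_sqrt
  have := Finset.single_le_sum (f := fun i => ((k i : ℝ)) ^ 2) (fun i _ => sq_nonneg _)
    (Finset.mem_univ i)
  linarith

theorem zbr_le {n N : ℕ} (hN : 1 ≤ N) (k : Fin n → ℤ) (hk : ∀ i, |(k i : ℝ)| ≤ 2 * N) :
    zbr k ≤ Real.sqrt (1 + 4 * n) * N := by
  unfold zbr
  have hN' : (1 : ℝ) ≤ N := by exact_mod_cast hN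
  rw [Real.sqrt_le_left (by positivity), mul_pow, Real.sq_sqrt (by positivity)]
  have h1 : ∑ i, ((k i : ℝ)) ^ 2 ≤ ∑ _i : Fin n, 4 * (N : ℝ) ^ 2 := by
    refine Finset.sum_le_sum fun i _ => ?_
    have := sq_le_sq' (by linarith [abs_nonneg (k i : ℝ), hk i]) (hk i)
    rw [sq_abs] at this
    linarith
  simp only [Finset.sum_const, Finset.card_univ, Fintype.card_fin, nsmul_eq_mul] at h1
  nlinarith

/-- The integer lattice has dimension `n`: `∑ ⟨k⟩ʳ` converges for `r < -n`. -/
theorem summable_zbr {n : ℕ} {r : ℝ} (hr : r < -n) :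
    Summable fun k : Fin n → ℤ => zbr k ^ r := by
  let b := Pi.basisFun ℝ (Fin n)
  let L : Submodule ℤ (Fin n → ℝ) := Submodule.span ℤ (Set.range b)
  have hrank : Module.finrank ℤ L = n := by
    rw [ZLattice.rank ℝ L]; simp
  have hmem : ∀ k : Fin n → ℤ, (fun i => (k i : ℝ)) ∈ L := by
    intro k
    rw [Module.Basis.mem_span_iff_repr_mem]
    intro i
    exact ⟨k i, by simp [b]⟩
  let e : (Fin n → ℤ) → L := fun k => ⟨_, hmem k⟩
  have he : Function.Injective e := by
    intro k l hkl
    funext i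
    have := congrFun (congrArg Subtype.val hkl) i
    simpa [e] using this
  have hs := (ZLattice.summable_norm_rpow L r (by rw [hrank]; exact hr)).comp_injective he
  refine Summable.of_norm_bounded_eventually hs ?_
  -- At `k = 0` the power `‖k‖ ^ r` is the junk value `0`, so that point is left out.
  refine (Set.finite_singleton (0 : Fin n → ℤ)).subset ?_
  intro k hk
  by_contra hk0
  apply hk
  have hpos : 0 < ‖e k‖ := by
    rw [norm_pos_iff]
    intro h0
    apply hk0
    apply he
    rw [h0]
    ext i
    simp [e]
  have hle : ‖e k‖ ≤ zbr k := by
    have : ‖(fun i => (k i : ℝ))‖ ≤ zbr k :=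
      (pi_norm_le_iff_of_nonneg (by linarith [one_le_zbr k])).2 fun i => abs_le_zbr k i
    exact this
  have hz : 0 < zbr k := by linarith [one_le_zbr k]
  have hn0 : (0 : ℝ) ≤ n := Nat.cast_nonneg n
  change ‖zbr k ^ r‖ ≤ ‖e k‖ ^ r
  rw [Real.norm_of_nonneg (by positivity)]
  exact Real.rpow_le_rpow_of_nonpos hpos hle (by linarith)

/-! ### Upper bound for the norm of a cube -/

theorem lns_mono {n : ℕ} (q : ℝ≥0∞) (s : ℝ) {f g : (Fin n → ℤ) → ℝ≥0∞} (h : ∀ k, f k ≤ g k) :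
    lns n q s f ≤ lns n q s g := by
  unfold lns
  split_ifs
  · exact iSup_mono fun k => by gcongr; exact h k
  · gcongr with k
    exact h k

theorem lns_mul_left {n : ℕ} (q : ℝ≥0∞) (hq : 1 ≤ q) (s : ℝ) (c : ℝ≥0∞)
    (f : (Fin n → ℤ) → ℝ≥0∞) :
    lns n q s (fun k => c * f k) = c * lns n q s f := by
  unfold lns
  split_ifs with hqt
  · rw [ENNReal.mul_iSup]
    simp only [mul_assoc]
  · have hq0 : 0 < q.toReal := ENNReal.toReal_pos (by positivity) hqt
    simp only [mul_assoc, ENNReal.mul_rpow_of_nonneg _ _ hq0.le]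
    rw [ENNReal.tsum_mul_left, ENNReal.mul_rpow_of_nonneg _ _ (by positivity),
      ← ENNReal.rpow_mul, mul_one_div_cancel hq0.ne', ENNReal.rpow_one]

theorem lns_zbr_ne_top {n : ℕ} (hn : 1 ≤ n) (q : ℝ≥0∞) (hq : 1 ≤ q) (s t : ℝ)
    (ht : iv q + s / n < t / n) :
    lns n q s (fun k => ENNReal.ofReal (zbr k ^ (-t))) ≠ ⊤ := by
  have hn' : (0 : ℝ) < n := by exact_mod_cast hn
  have hz : ∀ k : Fin n → ℤ, 0 < zbr k := fun k => by linarith [one_le_zbr k]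
  have hterm : ∀ k : Fin n → ℤ, ENNReal.ofReal (zbr k ^ (-t)) * ENNReal.ofReal (zbr k ^ s)
      = ENNReal.ofReal (zbr k ^ (s - t)) := by
    intro k
    rw [← ENNReal.ofReal_mul (by have := hz k; positivity), ← Real.rpow_add (hz k)]
    ring_nf
  unfold lns
  simp only [hterm]
  split_ifs with hqt
  · subst hqt
    simp only [iv, ENNReal.inv_top, ENNReal.toReal_zero, zero_add] at ht
    rw [div_lt_div_iff_of_pos_right hn'] at ht
    refine ne_top_of_le_ne_top ENNReal.one_ne_top (iSup_le fun k => ?_)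
    rw [ENNReal.ofReal_le_one]
    exact Real.rpow_le_one_of_one_le_of_nonpos (one_le_zbr k) (by linarith)
  · have hq0 : 0 < q.toReal := ENNReal.toReal_pos (by positivity) hqt
    have hr : (s - t) * q.toReal < -n := by
      rw [iv, ENNReal.toReal_inv] at ht
      have h2 := mul_lt_mul_of_pos_right ht (mul_pos hn' hq0)
      have e1 : (q.toReal⁻¹ + s / n) * (n * q.toReal) = n + s * q.toReal := by field_simp
      have e2 : t / n * (n * q.toReal) = t * q.toReal := by field_simp
      rw [e1, e2] at h2
      linarith
    apply ENNReal.rpow_ne_top_of_nonneg (by positivity)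
    have : ∀ k : Fin n → ℤ, ENNReal.ofReal (zbr k ^ (s - t)) ^ q.toReal
        = ENNReal.ofReal (zbr k ^ ((s - t) * q.toReal)) := by
      intro k
      have := hz k
      rw [ENNReal.ofReal_rpow_of_nonneg (by positivity) hq0.le, ← Real.rpow_mul this.le]
    simp only [this]
    exact (summable_zbr hr).tsum_ofReal_ne_top

/-- The indicator function of the cube `|kᵢ| ≤ 2N` in `ℤⁿ`. -/
noncomputable def cube (n N : ℕ) : (Fin n → ℤ) → ℝ≥0∞ :=
  Set.indicator {k | ∀ i, |(k i : ℝ)| ≤ 2 * N} 1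

/-- The norm of the cube is `O(N ^ t)` for every `t ≥ 0` with `t / n > 1 / q + s / n`, because the
cube is pointwise at most a constant times `N ^ t * ⟨k⟩ ^ (-t)`. Giving up an arbitrarily small
power of `N` avoids the logarithm at `1 / q + s / n = 0`. -/
theorem lns_cube_le {n : ℕ} (hn : 1 ≤ n) (q : ℝ≥0∞) (hq : 1 ≤ q) (s t : ℝ) (ht0 : 0 ≤ t)
    (ht : iv q + s / n < t / n) :
    ∃ K : ℝ≥0∞, K ≠ ⊤ ∧ ∀ N : ℕ, 1 ≤ N →
      lns n q s (cube n N) ≤ K * ENNReal.ofReal ((N : ℝ) ^ t) := by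
  refine ⟨ENNReal.ofReal (Real.sqrt (1 + 4 * n) ^ t) *
    lns n q s (fun k => ENNReal.ofReal (zbr k ^ (-t))),
    ENNReal.mul_ne_top ENNReal.ofReal_ne_top (lns_zbr_ne_top hn q hq s t ht), fun N hN => ?_⟩
  rw [mul_right_comm, ← ENNReal.ofReal_mul (by positivity),
    ← Real.mul_rpow (by positivity) (by positivity), ← lns_mul_left q hq]
  refine lns_mono q s fun k => ?_
  unfold cube
  refine Set.indicator_apply_le' (fun hk => ?_) (fun _ => zero_le)
  have hz : 0 < zbr k := by linarith [one_le_zbr k]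
  rw [← ENNReal.ofReal_mul (by positivity), Pi.one_apply, ENNReal.one_le_ofReal,
    Real.rpow_neg hz.le, ← div_eq_mul_inv, one_le_div (by positivity)]
  exact Real.rpow_le_rpow hz.le (zbr_le hN k hk) ht0

/-! ### Lower bounds for norms and for the convolution of cubes -/

theorem rpow_lower {D : ℝ} (hD : 0 < D) (s : ℝ) {x y : ℝ} (hy : 0 < y) (h1 : y ≤ x)
    (h2 : x ≤ D * y) : min 1 (D ^ s) * y ^ s ≤ x ^ s := by
  rcases le_total 0 s with hs | hs
  · calc min 1 (D ^ s) * y ^ s ≤ 1 * y ^ s := by gcongr; exact min_le_left _ _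
      _ ≤ x ^ s := by rw [one_mul]; exact Real.rpow_le_rpow hy.le h1 hs
  · calc min 1 (D ^ s) * y ^ s ≤ D ^ s * y ^ s := by gcongr; exact min_le_right _ _
      _ = (D * y) ^ s := (Real.mul_rpow hD.le hy.le).symm
      _ ≤ x ^ s := Real.rpow_le_rpow_of_nonpos (by linarith) h2 hs

/-- A function that is at least `M` at the origin has norm at least `M`. -/
theorem le_lns_zero {n : ℕ} (q : ℝ≥0∞) (hq : 1 ≤ q) (s : ℝ) (M : ℝ≥0∞)
    (f : (Fin n → ℤ) → ℝ≥0∞) (hf : M ≤ f 0) : M ≤ lns n q s f := by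
  have h0 : M ≤ f 0 * ENNReal.ofReal (zbr (0 : Fin n → ℤ) ^ s) := by simpa [zbr] using hf
  unfold lns
  split_ifs with hqt
  · exact le_iSup_of_le 0 h0
  · have hq0 : 0 < q.toReal := ENNReal.toReal_pos (by positivity) hqt
    calc M = (M ^ q.toReal) ^ (1 / q.toReal) := by
          rw [← ENNReal.rpow_mul, mul_one_div_cancel hq0.ne', ENNReal.rpow_one]
      _ ≤ ((f 0 * ENNReal.ofReal (zbr (0 : Fin n → ℤ) ^ s)) ^ q.toReal) ^ (1 / q.toReal) := by
          gcongr
      _ ≤ _ := by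
          gcongr
          exact ENNReal.le_tsum (f := fun k => (f k * ENNReal.ofReal (zbr k ^ s)) ^ q.toReal) 0

/-- On the cube `[N, 2N]ⁿ` the weight is comparable to `N ^ s` and there are at least `N ^ n`
lattice points, so `f ≥ M` there forces the norm of `f` to be at least of order
`M * N ^ (n * (1 / q + s / n))`. -/
theorem le_lns_cube {n : ℕ} (hn : 1 ≤ n) (q : ℝ≥0∞) (hq : 1 ≤ q) (s : ℝ) {N : ℕ} (hN : 1 ≤ N)
    (M : ℝ≥0∞) (f : (Fin n → ℤ) → ℝ≥0∞)
    (hf : ∀ k : Fin n → ℤ, (∀ i, (N : ℤ) ≤ k i ∧ k i ≤ 2 * N) → M ≤ f k) :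
    M * ENNReal.ofReal (min 1 (Real.sqrt (1 + 4 * n) ^ s) * (N : ℝ) ^ (n * (iv q + s / n)))
      ≤ lns n q s f := by
  have hn' : (0 : ℝ) < n := by exact_mod_cast hn
  have hN' : (0 : ℝ) < N := by exact_mod_cast hN
  set c := min 1 (Real.sqrt (1 + 4 * n) ^ s) with hc
  have hc0 : 0 < c := by rw [hc]; positivity
  have key : ∀ k : Fin n → ℤ, (∀ i, (N : ℤ) ≤ k i ∧ k i ≤ 2 * N) →
      M * ENNReal.ofReal (c * (N : ℝ) ^ s) ≤ f k * ENNReal.ofReal (zbr k ^ s) := by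
    intro k hk
    have hk' : ∀ i, (N : ℝ) ≤ k i ∧ (k i : ℝ) ≤ 2 * N := fun i => by
      obtain ⟨h1, h2⟩ := hk i
      exact ⟨by exact_mod_cast h1, by exact_mod_cast h2⟩
    gcongr
    · exact hf k hk
    · refine rpow_lower (by positivity) s hN' ?_ (zbr_le hN k fun i => ?_)
      · exact (hk' ⟨0, hn⟩).1.trans ((le_abs_self _).trans (abs_le_zbr k ⟨0, hn⟩))
      · rw [abs_of_nonneg (by linarith [(hk' i).1])]
        exact (hk' i).2
  unfold lns
  split_ifs with hqt
  · subst hqt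
    have : (n : ℝ) * (iv ⊤ + s / n) = s := by simp [iv]; field_simp
    rw [this]
    exact le_iSup_of_le (fun _ => (N : ℤ)) (key _ fun _ => ⟨le_rfl, by lia⟩)
  · have hq0 : 0 < q.toReal := ENNReal.toReal_pos (by positivity) hqt
    set S : Finset (Fin n → ℤ) := Fintype.piFinset fun _ => Finset.Icc (N : ℤ) (2 * N) with hS
    have hcard : (N : ℝ) ^ n ≤ (S.card : ℝ) := by
      have h1 : (2 * (N : ℤ) + 1 - N).toNat = N + 1 := by lia
      have : S.card = (N + 1) ^ n := by
        rw [hS, Fintype.card_piFinset]; simp [h1]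
      rw [this]; push_cast; gcongr; linarith
    have hexp : (N : ℝ) ^ (n * (iv q + s / n)) = (N : ℝ) ^ s * ((N : ℝ) ^ n) ^ (1 / q.toReal) := by
      rw [← Real.rpow_natCast, ← Real.rpow_mul hN'.le, ← Real.rpow_add hN', iv,
        ENNReal.toReal_inv]
      congr 1
      field_simp
      ring
    calc M * ENNReal.ofReal (c * (N : ℝ) ^ (n * (iv q + s / n)))
        = (ENNReal.ofReal ((N : ℝ) ^ n) * (M * ENNReal.ofReal (c * (N : ℝ) ^ s)) ^ q.toReal)
            ^ (1 / q.toReal) := by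
          rw [ENNReal.mul_rpow_of_nonneg _ _ (by positivity), ← ENNReal.rpow_mul,
            mul_one_div_cancel hq0.ne', ENNReal.rpow_one,
            ENNReal.ofReal_rpow_of_nonneg (by positivity) (by positivity), hexp, ← mul_assoc c,
            ENNReal.ofReal_mul (p := c * (N : ℝ) ^ s) (by positivity)]
          ring
      _ ≤ (∑ k ∈ S, (f k * ENNReal.ofReal (zbr k ^ s)) ^ q.toReal) ^ (1 / q.toReal) := by
          gcongr
          have h1 : ∑ _k ∈ S, (M * ENNReal.ofReal (c * (N : ℝ) ^ s)) ^ q.toReal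
              ≤ ∑ k ∈ S, (f k * ENNReal.ofReal (zbr k ^ s)) ^ q.toReal := by
            refine Finset.sum_le_sum fun k hk => ?_
            refine ENNReal.rpow_le_rpow (key k fun i => ?_) hq0.le
            exact Finset.mem_Icc.1 (Fintype.mem_piFinset.1 hk i)
          refine le_trans ?_ h1
          rw [Finset.sum_const, nsmul_eq_mul]
          gcongr
          rw [← ENNReal.ofReal_natCast]
          exact ENNReal.ofReal_le_ofReal hcard
      _ ≤ _ := by
          gcongr
          exact ENNReal.sum_le_tsum S

/-- For `k ∈ [0, 2N]ⁿ` every `j ∈ [0, N)ⁿ` contributes `1` to the self-convolution of the cube. -/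
theorem le_dconv_cube {n N : ℕ} (k : Fin n → ℤ) (hk : ∀ i, 0 ≤ k i ∧ k i ≤ 2 * N) :
    ENNReal.ofReal ((N : ℝ) ^ (n : ℝ)) ≤ dconv (cube n N) (cube n N) k := by
  unfold dconv
  set S : Finset (Fin n → ℤ) := Fintype.piFinset fun _ => Finset.Ico (0 : ℤ) N with hS
  have hcard : S.card = N ^ n := by rw [hS, Fintype.card_piFinset]; simp
  refine le_trans ?_ (ENNReal.sum_le_tsum S)
  have h1 : ∑ _j ∈ S, (1 : ℝ≥0∞) ≤ ∑ j ∈ S, cube n N (k - j) * cube n N j := by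
    refine Finset.sum_le_sum fun j hj => ?_
    have hj' : ∀ i, 0 ≤ j i ∧ j i < N := fun i => Finset.mem_Ico.1 (Fintype.mem_piFinset.1 hj i)
    have ha : cube n N (k - j) = 1 := by
      refine Set.indicator_of_mem (fun i => ?_) _
      have : |(k - j) i| ≤ 2 * (N : ℤ) := by
        have := hj' i; have := hk i
        rw [Pi.sub_apply, abs_le]; constructor <;> lia
      exact_mod_cast this
    have hb : cube n N j = 1 := by
      refine Set.indicator_of_mem (fun i => ?_) _
      have : |j i| ≤ 2 * (N : ℤ) := by
        have := hj' i
        rw [abs_le]; constructor <;> lia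
      exact_mod_cast this
    rw [ha, hb, one_mul]
  refine le_trans ?_ h1
  rw [Finset.sum_const, hcard, Real.rpow_natCast, nsmul_eq_mul, mul_one,
    ← ENNReal.ofReal_natCast]
  push_cast
  exact le_rfl

/-! ### Comparison of powers of `N` -/

theorem le_of_rpow_le {c K α β : ℝ} (hc : 0 < c)
    (h : ∀ N : ℕ, 1 ≤ N → c * (N : ℝ) ^ α ≤ K * (N : ℝ) ^ β) : α ≤ β := by
  by_contra! hlt
  have ht := ((tendsto_rpow_atTop (sub_pos.2 hlt)).comp
    tendsto_natCast_atTop_atTop).eventually_gt_atTop (K / c)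
  obtain ⟨N, hN, hN1⟩ := (ht.and (Filter.eventually_ge_atTop 1)).exists
  have hN' : (0 : ℝ) < N := by exact_mod_cast hN1
  simp only [Function.comp_apply] at hN
  rw [div_lt_iff₀ hc, Real.rpow_sub hN', div_mul_eq_mul_div, lt_div_iff₀ (by positivity)] at hN
  linarith [h N hN1]

/-- Lower bound for the left-hand side of Young's inequality tested on cubes. -/
theorem le_lns_dconv_cube {n : ℕ} (hn : 1 ≤ n) (q : ℝ≥0∞) (hq : 1 ≤ q) (s : ℝ) :
    ∃ c : ℝ, 0 < c ∧ ∀ N : ℕ, 1 ≤ N →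
      ENNReal.ofReal (c * (N : ℝ) ^ (n + n * max (iv q + s / n) 0))
        ≤ lns n q s (dconv (cube n N) (cube n N)) := by
  refine ⟨min 1 (Real.sqrt (1 + 4 * n) ^ s), by positivity, fun N hN => ?_⟩
  have hN' : (0 : ℝ) < N := by exact_mod_cast hN
  rcases le_total (iv q + s / n) 0 with hA | hA
  · rw [max_eq_right hA, mul_zero, add_zero]
    refine le_trans ?_ (le_lns_zero q hq s _ _ (le_dconv_cube (N := N) 0 fun i => by simp))
    refine ENNReal.ofReal_le_ofReal ?_
    exact mul_le_of_le_one_left (by positivity) (min_le_left _ _)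
  · rw [max_eq_left hA, Real.rpow_add hN', mul_left_comm, ENNReal.ofReal_mul (by positivity)]
    exact le_lns_cube hn q hq s hN _ _ fun k hk =>
      le_dconv_cube k fun i => ⟨by have := hk i; lia, (hk i).2⟩

/-- necessary scaling condition for the discrete weighted Young
inequality. -/
theorem discrete_weighted_young_necessary_scaling
    (n : ℕ) (hn : 1 ≤ n) (q q₁ q₂ : ℝ≥0∞) (hq : 1 ≤ q) (hq₁ : 1 ≤ q₁) (hq₂ : 1 ≤ q₂)
    (s s₁ s₂ : ℝ)
    (h : ∃ C : ℝ≥0, ∀ a b : (Fin n → ℤ) → ℝ≥0∞,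
        lns n q s (dconv a b) ≤ C * lns n q₁ s₁ a * lns n q₂ s₂ b) :
    1 + max (iv q + s / (n : ℝ)) 0 ≤
      max (iv q₁ + s₁ / (n : ℝ)) 0 + max (iv q₂ + s₂ / (n : ℝ)) 0 := by
  obtain ⟨C, hC⟩ := h
  have hn' : (0 : ℝ) < n := by exact_mod_cast hn
  obtain ⟨c, hc, hlow⟩ := le_lns_dconv_cube hn q hq s
  refine le_of_forall_pos_le_add fun ε hε => ?_
  -- Each of the two norms on the right loses a factor `N ^ (n * (ε / 2))`.
  have up : ∀ (p : ℝ≥0∞) (r : ℝ), 1 ≤ p → ∃ K : ℝ≥0∞, K ≠ ⊤ ∧ ∀ N : ℕ, 1 ≤ N →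
      lns n p r (cube n N) ≤
        K * ENNReal.ofReal ((N : ℝ) ^ (n * (max (iv p + r / n) 0 + ε / 2))) := by
    intro p r hp
    refine lns_cube_le hn p hp r _ (by positivity) ?_
    rw [mul_div_cancel_left₀ _ hn'.ne']
    linarith [le_max_left (iv p + r / n) 0]
  obtain ⟨K₁, hK₁, h₁⟩ := up q₁ s₁ hq₁
  obtain ⟨K₂, hK₂, h₂⟩ := up q₂ s₂ hq₂
  have hmain : (n : ℝ) + n * max (iv q + s / n) 0 ≤
      n * (max (iv q₁ + s₁ / n) 0 + ε / 2) + n * (max (iv q₂ + s₂ / n) 0 + ε / 2) := by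
    refine le_of_rpow_le (K := (C * K₁ * K₂).toReal) hc fun N hN => ?_
    have hN' : (0 : ℝ) < N := by exact_mod_cast hN
    have hK : C * K₁ * K₂ ≠ ⊤ := ENNReal.mul_ne_top (ENNReal.mul_ne_top (by simp) hK₁) hK₂
    have hle := ((hlow N hN).trans (hC _ _)).trans
      (mul_le_mul' (mul_le_mul' le_rfl (h₁ N hN)) (h₂ N hN))
    rw [← mul_assoc (C : ℝ≥0∞), mul_mul_mul_comm, ← ENNReal.ofReal_mul (by positivity),
      ← Real.rpow_add hN', ← ENNReal.ofReal_toReal hK,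
      ← ENNReal.ofReal_mul ENNReal.toReal_nonneg] at hle
    exact (ENNReal.ofReal_le_ofReal_iff (by positivity)).1 hle
  refine le_of_mul_le_mul_left ?_ hn'
  linarith
end

section
/- Let n ≥ 1, 1 ≤ q, q₁, q₂ ≤ ∞ and s, s₁, s₂ ∈ ℝ, and let q', q₁' denote the dual exponents of q, q₁. If the discrete weighted Young inequality l(q₁,s₁) ∗ l(q₂,s₂) ⊂ l(q,s) holds (there is a constant C with ‖a∗b‖_{l(q,s)} ≤ C‖a‖_{l(q₁,s₁)}‖b‖_{l(q₂,s₂)} for all nonnegative sequences a, b), then the dual inequality l(q',−s) ∗ l(q₂,s₂) ⊂ l(q₁',−s₁) holds, i.e., there is a constant C' with ‖a∗b‖_{l(q₁',−s₁)} ≤ C'‖a‖_{l(q',−s)}‖b‖_{l(q₂,s₂)} for all nonnegative sequences a, b. -/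
/-!
Convolution with `b` has convolution with the reflection of `b` as its adjoint: for nonnegative
sequences, `∑ₖ (a∗b)(k) g(k) = ∑ₘ a(m) (g̃∗b)(-m)` with `g̃(m) = g(-m)`, by Tonelli
(`tsum_dconv_mul`). Hölder's inequality with weights `⟨m⟩^{-s}`, `⟨m⟩^s` (`tsum_mul_le_lpn`), the
invariance of the norms under reflection, and the assumed Young inequality bound the right-hand side
by `C ‖a‖_{l(q',-s)} ‖g‖_{l(q₁,s₁)} ‖b‖_{l(q₂,s₂)}`. The converse of Hölder's inequality
(`lpn_dualExp_le`) turns this bound for all `g` into the bound on `‖a∗b‖_{l(q₁',-s₁)}`,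
with the same constant.
-/

open scoped ENNReal NNReal BigOperators
open MeasureTheory

/-- The unweighted `ℓ^q` norm of an `ℝ≥0∞`-valued family, with the same case split as `lns`. -/
noncomputable def lpn {ι : Type*} (q : ℝ≥0∞) (f : ι → ℝ≥0∞) : ℝ≥0∞ :=
  if q = ∞ then ⨆ k, f k else (∑' k, f k ^ q.toReal) ^ (1 / q.toReal)

lemma lns_eq_lpn (n : ℕ) (q : ℝ≥0∞) (s : ℝ) (a : (Fin n → ℤ) → ℝ≥0∞) :
    lns n q s a = lpn q (fun k => a k * ENNReal.ofReal (zbr k ^ s)) := rfl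

lemma lpn_top {ι : Type*} (f : ι → ℝ≥0∞) : lpn ∞ f = ⨆ k, f k := if_pos rfl

lemma lpn_one {ι : Type*} (f : ι → ℝ≥0∞) : lpn 1 f = ∑' k, f k := by simp [lpn]

lemma lpn_ofReal {ι : Type*} {p : ℝ} (hp : 0 < p) (f : ι → ℝ≥0∞) :
    lpn (ENNReal.ofReal p) f = (∑' k, f k ^ p) ^ (1 / p) := by
  simp [lpn, ENNReal.toReal_ofReal hp.le]

lemma lpn_comp_equiv {ι : Type*} (q : ℝ≥0∞) (e : ι ≃ ι) (f : ι → ℝ≥0∞) :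
    lpn q (fun k => f (e k)) = lpn q f := by
  unfold lpn
  rw [e.iSup_comp (g := f), e.tsum_eq (fun k => f k ^ q.toReal)]

lemma lpn_single {ι : Type*} [DecidableEq ι] {q : ℝ≥0∞} (hq : 1 ≤ q) (k : ι) :
    lpn q (Pi.single k 1) ≤ 1 := by
  unfold lpn
  split_ifs with h
  · refine iSup_le fun j => ?_
    by_cases hj : j = k
    · subst hj; simp
    · simp [hj]
  · have h0 : 0 < q.toReal := ENNReal.toReal_pos (by positivity) h
    rw [tsum_eq_single k]
    · simp
    · intro j hj
      simp [hj, h0]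

/-- The three regimes of the pair `(q, q')`. -/
lemma dualExp_cases {q : ℝ≥0∞} (hq : 1 ≤ q) :
    (q = ∞ ∧ dualExp q = 1) ∨ (q = 1 ∧ dualExp q = ∞) ∨
      ∃ p r : ℝ, p.HolderConjugate r ∧ q = ENNReal.ofReal p ∧ dualExp q = ENNReal.ofReal r := by
  by_cases h1 : q = ∞
  · exact Or.inl ⟨h1, by simp [dualExp, h1]⟩
  by_cases h2 : q = 1
  · exact Or.inr (Or.inl ⟨h2, by simp [dualExp, h2]⟩)
  refine Or.inr (Or.inr ⟨q.toReal, q.toReal / (q.toReal - 1), ?_, ?_, ?_⟩)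
  · apply Real.HolderConjugate.conjExponent
    have := (ENNReal.toReal_lt_toReal ENNReal.one_ne_top h1).2 (lt_of_le_of_ne hq (Ne.symm h2))
    simpa using this
  · exact (ENNReal.ofReal_toReal h1).symm
  · simp [dualExp, h1, h2]

/-- Hölder's inequality for sums. -/
lemma tsum_mul_le_lpn {ι : Type*} {q : ℝ≥0∞} (hq : 1 ≤ q) (f g : ι → ℝ≥0∞) :
    ∑' k, f k * g k ≤ lpn q f * lpn (dualExp q) g := by
  rcases dualExp_cases hq with ⟨h1, h2⟩ | ⟨h1, h2⟩ | ⟨p, r, hpr, h1, h2⟩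
  · rw [h2, h1, lpn_top, lpn_one, ← ENNReal.tsum_mul_left]
    exact ENNReal.tsum_le_tsum fun k => by gcongr; exact le_iSup f k
  · rw [h2, h1, lpn_top, lpn_one, ← ENNReal.tsum_mul_right]
    exact ENNReal.tsum_le_tsum fun k => by gcongr; exact le_iSup g k
  · rw [h2, h1, lpn_ofReal hpr.pos, lpn_ofReal hpr.symm.pos]
    let _ : MeasurableSpace ι := ⊤
    have := ENNReal.lintegral_mul_le_Lp_mul_Lq (Measure.count : Measure ι) hpr
      (f := f) (g := g) measurable_from_top.aemeasurable measurable_from_top.aemeasurable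
    simpa only [lintegral_count, Pi.mul_apply] using this

/-- The converse of Hölder's inequality: a bound on all pairings with `f` bounds `‖f‖_{q'}`. -/
lemma lpn_dualExp_le {ι : Type*} {q : ℝ≥0∞} (hq : 1 ≤ q) (f : ι → ℝ≥0∞) (M : ℝ≥0∞)
    (h : ∀ g : ι → ℝ≥0∞, ∑' k, f k * g k ≤ M * lpn q g) : lpn (dualExp q) f ≤ M := by
  classical
  have hpt : ∀ k, f k ≤ M := fun k => by
    have h1 := h (Pi.single k 1)
    rw [tsum_eq_single k (fun j hj => by simp [hj])] at h1
    simp only [Pi.single_eq_same, mul_one] at h1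
    exact h1.trans ((mul_le_mul_right (lpn_single hq k) M).trans_eq (mul_one M))
  rcases dualExp_cases hq with ⟨h1, h2⟩ | ⟨h1, h2⟩ | ⟨p, r, hpr, h1, h2⟩
  · rw [h2, lpn_one]
    have h3 := h 1
    rw [h1, lpn_top] at h3
    simp only [Pi.one_apply, mul_one] at h3
    exact h3.trans ((mul_le_mul_right (iSup_le fun _ => le_rfl) M).trans_eq (mul_one M))
  · rw [h2, lpn_top]
    exact iSup_le hpt
  · rw [h2, lpn_ofReal hpr.symm.pos]
    rcases eq_or_ne M ∞ with hM | hM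
    · simp [hM]
    have hr := hpr.symm.pos
    rw [one_div, ENNReal.rpow_inv_le_iff hr, ENNReal.tsum_eq_iSup_sum]
    refine iSup_le fun T => ?_
    set S := ∑ k ∈ T, f k ^ r with hS
    rcases eq_or_ne S 0 with hS0 | hS0
    · simp [hS0]
    -- Finiteness of `S` is what allows the factor `S ^ (1 / p)` to be cancelled below.
    have hSt : S ≠ ∞ := by
      refine ENNReal.sum_ne_top.2 fun k _ => ?_
      exact ENNReal.rpow_ne_top_of_nonneg hr.le ((hpt k).trans_lt hM.lt_top).ne
    -- The extremal test sequence for Hölder's inequality, truncated to `T`.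
    have h3 := h (fun k => if k ∈ T then f k ^ (r - 1) else 0)
    have e1 : ∑' k, f k * (if k ∈ T then f k ^ (r - 1) else 0) = S := by
      rw [tsum_eq_sum (s := T) (fun k hk => by simp [hk])]
      refine Finset.sum_congr rfl fun k hk => ?_
      rw [if_pos hk]
      have := ENNReal.rpow_add_of_nonneg (x := f k) 1 (r - 1) zero_le_one
        hpr.symm.sub_one_pos.le
      rw [ENNReal.rpow_one] at this
      rw [← this]
      congr 1
      ring
    have e2 : ∑' k, (if k ∈ T then f k ^ (r - 1) else 0) ^ p = S := by
      rw [tsum_eq_sum (s := T) (fun k hk => by simp [hk, hpr.pos])]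
      refine Finset.sum_congr rfl fun k hk => ?_
      rw [if_pos hk, ← ENNReal.rpow_mul, hpr.symm.sub_one_mul_conj]
    rw [e1, h1, lpn_ofReal hpr.pos, e2] at h3
    have e3 : S = S ^ (1 / r) * S ^ (1 / p) := by
      rw [← ENNReal.rpow_add _ _ hS0 hSt, add_comm, one_div, one_div, hpr.inv_add_inv_eq_one,
        ENNReal.rpow_one]
    have h4 : S ^ (1 / r) * S ^ (1 / p) ≤ M * S ^ (1 / p) := e3 ▸ h3
    have hp1 := hpr.one_div_nonneg
    have h5 : S ^ (1 / r) ≤ M :=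
      (ENNReal.mul_le_mul_iff_left
        (by simp [ENNReal.rpow_eq_zero_iff, hS0, hSt])
        (ENNReal.rpow_ne_top_of_nonneg hp1 hSt)).1 h4
    rwa [one_div, ENNReal.rpow_inv_le_iff hr] at h5

/-- The transpose of `a ↦ a ∗ b` is `g ↦ g̃ ∗ b` up to reflection, where `g̃ m = g (-m)`. -/
lemma tsum_dconv_mul {n : ℕ} (a b g : (Fin n → ℤ) → ℝ≥0∞) :
    ∑' k, dconv a b k * g k = ∑' m, dconv (fun i => g (-i)) b (-m) * a m := by
  simp only [dconv, ← ENNReal.tsum_mul_right]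
  rw [ENNReal.tsum_comm]
  conv_rhs => rw [ENNReal.tsum_comm]
  refine tsum_congr fun j => ?_
  rw [← (Equiv.addRight j).tsum_eq]
  refine tsum_congr fun m => ?_
  simp only [Equiv.coe_addRight, add_sub_cancel_right, neg_sub, sub_neg_eq_add, add_comm j m]
  ring

lemma zbr_pos {n : ℕ} (k : Fin n → ℤ) : 0 < zbr k := by
  unfold zbr
  positivity

lemma zbr_neg {n : ℕ} (k : Fin n → ℤ) : zbr (-k) = zbr k := by simp [zbr]

lemma weight_mul_neg {n : ℕ} (k : Fin n → ℤ) (s : ℝ) :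
    ENNReal.ofReal (zbr k ^ s) * ENNReal.ofReal (zbr k ^ (-s)) = 1 := by
  rw [← ENNReal.ofReal_mul (by have := zbr_pos k; positivity), ← Real.rpow_add (zbr_pos k)]
  simp

lemma lns_comp_neg (n : ℕ) (q : ℝ≥0∞) (s : ℝ) (a : (Fin n → ℤ) → ℝ≥0∞) :
    lns n q s (fun k => a (-k)) = lns n q s a := by
  rw [lns_eq_lpn, lns_eq_lpn, ← lpn_comp_equiv q (Equiv.neg _)]
  simp [zbr_neg]

/-- duality for the discrete weighted Young inequality. -/
theorem discrete_weighted_young_dual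
    (n : ℕ) (hn : 1 ≤ n) (q q₁ q₂ : ℝ≥0∞) (hq : 1 ≤ q) (hq₁ : 1 ≤ q₁) (hq₂ : 1 ≤ q₂)
    (s s₁ s₂ : ℝ)
    (h : ∃ C : ℝ≥0, ∀ a b : (Fin n → ℤ) → ℝ≥0∞,
        lns n q s (dconv a b) ≤ C * lns n q₁ s₁ a * lns n q₂ s₂ b) :
    ∃ C' : ℝ≥0, ∀ a b : (Fin n → ℤ) → ℝ≥0∞,
      lns n (dualExp q₁) (-s₁) (dconv a b) ≤
        C' * lns n (dualExp q) (-s) a * lns n q₂ s₂ b := by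
  obtain ⟨C, hC⟩ := h
  refine ⟨C, fun a b => ?_⟩
  rw [lns_eq_lpn n (dualExp q₁)]
  refine lpn_dualExp_le hq₁ _ _ fun g => ?_
  -- The weight `⟨k⟩^{-s₁}` is moved onto the test sequence.
  set G : (Fin n → ℤ) → ℝ≥0∞ := fun k => g k * ENNReal.ofReal (zbr k ^ (-s₁)) with hG
  have hGn : lns n q₁ s₁ G = lpn q₁ g := by
    rw [lns_eq_lpn]
    congr 1
    funext k
    rw [hG, mul_assoc, mul_comm (ENNReal.ofReal _), weight_mul_neg, mul_one]
  set H := dconv (fun i => G (-i)) b with hH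
  calc ∑' k, dconv a b k * ENNReal.ofReal (zbr k ^ (-s₁)) * g k
      = ∑' k, dconv a b k * G k := tsum_congr fun k => by rw [hG]; ring
    _ = ∑' m, H (-m) * a m := tsum_dconv_mul a b G
    _ = ∑' m, (H (-m) * ENNReal.ofReal (zbr m ^ s)) * (a m * ENNReal.ofReal (zbr m ^ (-s))) :=
        tsum_congr fun m => by
          rw [mul_mul_mul_comm, weight_mul_neg, mul_one]
    _ ≤ lns n q s (fun m => H (-m)) * lns n (dualExp q) (-s) a := tsum_mul_le_lpn hq _ _
    _ = lns n q s H * lns n (dualExp q) (-s) a := by rw [lns_comp_neg]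
    _ ≤ (C * lns n q₁ s₁ (fun i => G (-i)) * lns n q₂ s₂ b) * lns n (dualExp q) (-s) a := by
        gcongr
        exact hC _ b
    _ = C * lns n (dualExp q) (-s) a * lns n q₂ s₂ b * lpn q₁ g := by
        rw [lns_comp_neg, hGn]
        ring
end

section
/- Let n ≥ 1, 1 ≤ q₁, q₂ ≤ ∞ and s, s₁, s₂ ∈ ℝ with s > 0, s < s₁, s < s₂ and 1 = 1/q₁ + 1/q₂ + (s₁+s₂−s)/n. Then there is a constant C such that for all nonnegative measurable f, g on ℝⁿ, ess sup_{x∈ℝⁿ} |x|^s (f∗g)(x) ≤ C ‖f‖_{𝕃(q₁,s₁)} ‖g‖_{𝕃(q₂,s₂)}; that is, the endpoint power-weighted Young inequality 𝕃(q₁,s₁) ∗ 𝕃(q₂,s₂) ⊂ 𝕃(∞,s) holds. -/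
/-!
The convolution at `x ≠ 0` is the integral of `(f·|·|^s₁)(x - y)`, `(g·|·|^s₂)(y)` and the kernel
`|x - y|^(-s₁) |y|^(-s₂)`. Hölder's inequality with the three exponents `q₁`, `q₂` and `1/w`, where
`w = 1 - 1/q₁ - 1/q₂ = (s₁ + s₂ - s)/n`, gives
`(f ∗ g)(x) ≤ ‖f‖ ‖g‖ (∫ |x - y|^(-a) |y|^(-b) dy)^w` with `a = s₁/w`, `b = s₂/w`.

The conditions `s < s₂` and `s < s₁` say exactly that `a < n` and `b < n`, so that the two
singularities are locally integrable, and `0 < s` says that `a + b > n`, so that the kernel is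
integrable at infinity (`lintegral_kernel_le`). Homogeneity bounds the kernel integral by a
multiple of `|x|^(n - a - b)`, whose `w`-th power is `|x|^(-s)`.

The kernel is estimated in the sup norm of `Fin n → ℝ`, which is at most the Euclidean norm
`rnorm`; the reverse comparison costs a factor `√n` and is needed only once, at `x`.
-/


open scoped ENNReal NNReal BigOperators
open MeasureTheory

/-! ### The kernel integral -/

/-- A function `H` such that, for `a, b ≥ 0`, `‖e - y‖ ^ (-a) * ‖y‖ ^ (-b) ≤ H y + H (e - y)` for
every unit vector `e`. Its terms account for a singularity at the origin of either order and for the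
decay of order `a + b` at infinity; it is integrable when `a, b < n < a + b`. -/
noncomputable def kerMaj (n : ℕ) (a b : ℝ) (z : Fin n → ℝ) : ℝ :=
  2 ^ a * (Metric.ball (0 : Fin n → ℝ) 1).indicator (fun z => ‖z‖ ^ (-b)) z
    + 2 ^ b * (Metric.ball (0 : Fin n → ℝ) 1).indicator (fun z => ‖z‖ ^ (-a)) z
    + 3 ^ (a + b) * (1 + ‖z‖) ^ (-(a + b))

lemma integrable_ball_rpow {n : ℕ} (hn : 1 ≤ n) {b : ℝ} (hb : b < n) :
    Integrable ((Metric.ball (0 : Fin n → ℝ) 1).indicator (fun z => ‖z‖ ^ (-b))) := by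
  rw [integrable_indicator_iff Metric.isOpen_ball.measurableSet]
  refine integrableOn_ball_of_norm_le_rpow (C := 1) (α := b) (by simpa using hn) (by simpa using hb)
    (Filter.Eventually.of_forall fun z => ?_) ?_
  · rw [one_mul, Real.norm_of_nonneg (by positivity)]
  · exact (by fun_prop : Measurable fun z : Fin n → ℝ => ‖z‖ ^ (-b)).aestronglyMeasurable

lemma integrable_kerMaj {n : ℕ} (hn : 1 ≤ n) {a b : ℝ} (ha : a < n) (hb : b < n)
    (hab : n < a + b) : Integrable (kerMaj n a b) := by
  unfold kerMaj
  refine (((integrable_ball_rpow hn hb).const_mul _).add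
    ((integrable_ball_rpow hn ha).const_mul _)).add (Integrable.const_mul ?_ _)
  exact integrable_one_add_norm (by simpa using hab)

lemma kerMaj_nonneg {n : ℕ} (a b : ℝ) (z : Fin n → ℝ) : 0 ≤ kerMaj n a b z := by
  unfold kerMaj
  have h (c : ℝ) : 0 ≤ (Metric.ball (0 : Fin n → ℝ) 1).indicator (fun z => ‖z‖ ^ (-c)) z :=
    Set.indicator_nonneg (fun _ _ => by positivity) _
  have := h a
  have := h b
  positivity

lemma tail_bound {t c : ℝ} (hc : 0 ≤ c) (ht : 1 / 2 ≤ t) :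
    t ^ (-c) ≤ 3 ^ c * (1 + t) ^ (-c) := by
  have h0 : 0 < t := by linarith
  rw [Real.rpow_neg h0.le, Real.rpow_neg (by linarith), ← div_eq_mul_inv,
    ← Real.div_rpow (by norm_num) (by linarith), ← Real.inv_rpow h0.le]
  refine Real.rpow_le_rpow (by positivity) ?_ hc
  rw [inv_eq_one_div, div_le_div_iff₀ h0 (by linarith)]
  linarith

lemma half_bound {t c : ℝ} (hc : 0 ≤ c) (ht : 1 / 2 ≤ t) : t ^ (-c) ≤ 2 ^ c := by
  have h0 : 0 < t := by linarith
  rw [Real.rpow_neg h0.le, ← Real.inv_rpow h0.le]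
  refine Real.rpow_le_rpow (by positivity) ?_ hc
  rw [inv_le_comm₀ h0 (by norm_num)]
  linarith

lemma kernel_le {n : ℕ} {a b : ℝ} (ha : 0 ≤ a) (hb : 0 ≤ b) {e : Fin n → ℝ} (he : ‖e‖ = 1)
    (y : Fin n → ℝ) :
    ‖e - y‖ ^ (-a) * ‖y‖ ^ (-b) ≤ kerMaj n a b y + kerMaj n a b (e - y) := by
  have hI (c : ℝ) (z : Fin n → ℝ) :
      0 ≤ (Metric.ball (0 : Fin n → ℝ) 1).indicator (fun z => ‖z‖ ^ (-c)) z :=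
    Set.indicator_nonneg (fun _ _ => by positivity) _
  have hB (c : ℝ) (z : Fin n → ℝ) (hz : ‖z‖ < 1 / 2) :
      (Metric.ball (0 : Fin n → ℝ) 1).indicator (fun z => ‖z‖ ^ (-c)) z = ‖z‖ ^ (-c) :=
    Set.indicator_of_mem (by simp only [Metric.mem_ball, dist_zero_right]; linarith) _
  have hT (z : Fin n → ℝ) : 0 ≤ (3 : ℝ) ^ (a + b) * (1 + ‖z‖) ^ (-(a + b)) := by positivity
  have h2 (c : ℝ) : 0 ≤ (2 : ℝ) ^ c := by positivity
  have htri : 1 ≤ ‖e - y‖ + ‖y‖ := by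
    rw [← he]; simpa using norm_add_le (e - y) y
  have hM (z : Fin n → ℝ) : 3 ^ (a + b) * (1 + ‖z‖) ^ (-(a + b)) ≤ kerMaj n a b z := by
    have := mul_nonneg (h2 a) (hI b z)
    have := mul_nonneg (h2 b) (hI a z)
    unfold kerMaj; linarith
  rcases lt_or_ge ‖y‖ (1 / 2) with hy | hy
  · have h := mul_le_mul_of_nonneg_right (half_bound ha (by linarith : 1 / 2 ≤ ‖e - y‖))
      (by positivity : 0 ≤ ‖y‖ ^ (-b))
    have := kerMaj_nonneg a b (e - y)
    have := mul_nonneg (h2 b) (hI a y)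
    have := hT y
    rw [← hB b y hy] at h ⊢
    unfold kerMaj at *; linarith
  rcases lt_or_ge ‖e - y‖ (1 / 2) with hz | hz
  · have h := mul_le_mul_of_nonneg_left (half_bound hb hy)
      (by positivity : 0 ≤ ‖e - y‖ ^ (-a))
    have := kerMaj_nonneg a b y
    have := mul_nonneg (h2 a) (hI b (e - y))
    have := hT (e - y)
    rw [← hB a (e - y) hz] at h ⊢
    unfold kerMaj at *; linarith
  -- Away from both singularities the smaller of the two norms dominates with exponent `a + b`.
  have hsum {t : ℝ} (ht : 1 / 2 ≤ t) : t ^ (-a) * t ^ (-b) = t ^ (-(a + b)) := by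
    rw [← Real.rpow_add (by linarith)]; ring_nf
  rcases le_total ‖y‖ ‖e - y‖ with hle | hle
  · have h1 : ‖e - y‖ ^ (-a) ≤ ‖y‖ ^ (-a) :=
      Real.rpow_le_rpow_of_nonpos (by linarith) hle (by linarith)
    have h3 := mul_le_mul_of_nonneg_right h1 (by positivity : 0 ≤ ‖y‖ ^ (-b))
    rw [hsum hy] at h3
    have := tail_bound (add_nonneg ha hb) hy
    have := hM y
    have := kerMaj_nonneg a b (e - y)
    linarith
  · have h1 : ‖y‖ ^ (-b) ≤ ‖e - y‖ ^ (-b) :=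
      Real.rpow_le_rpow_of_nonpos (by linarith) hle (by linarith)
    have h3 := mul_le_mul_of_nonneg_left h1 (by positivity : 0 ≤ ‖e - y‖ ^ (-a))
    rw [hsum hz] at h3
    have := tail_bound (add_nonneg ha hb) hz
    have := hM (e - y)
    have := kerMaj_nonneg a b y
    linarith

lemma lintegral_comp_smul_pi {n : ℕ} {t : ℝ} (ht : 0 < t) {F : (Fin n → ℝ) → ℝ≥0∞}
    (hF : Measurable F) :
    ∫⁻ y, F y = ENNReal.ofReal (t ^ n) * ∫⁻ z, F (t • z) := by
  have h := Measure.map_addHaar_smul (volume : Measure (Fin n → ℝ)) ht.ne'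
  rw [Module.finrank_fin_fun] at h
  rw [← lintegral_map (μ := volume) (g := fun z : Fin n → ℝ => t • z) hF (by fun_prop)]
  have h' : Measure.map (fun z : Fin n → ℝ => t • z) volume =
      ENNReal.ofReal |(t ^ n)⁻¹| • (volume : Measure (Fin n → ℝ)) := h
  rw [h', lintegral_smul_measure, smul_eq_mul, ← mul_assoc,
    ← ENNReal.ofReal_mul (by positivity), abs_of_pos (by positivity),
    mul_inv_cancel₀ (by positivity), ENNReal.ofReal_one, one_mul]

/-- The convolution of two locally integrable powers whose product decays integrably at infinity is
bounded by the power dictated by homogeneity. -/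
lemma lintegral_kernel_le {n : ℕ} (hn : 1 ≤ n) {a b : ℝ} (ha0 : 0 ≤ a) (hb0 : 0 ≤ b)
    (ha : a < n) (hb : b < n) (hab : n < a + b) :
    ∃ C : ℝ≥0, ∀ x : Fin n → ℝ, x ≠ 0 →
      ∫⁻ y, ENNReal.ofReal (‖x - y‖ ^ (-a)) * ENNReal.ofReal (‖y‖ ^ (-b))
        ≤ C * ENNReal.ofReal (‖x‖ ^ (n - (a + b))) := by
  set I := ∫⁻ z, ENNReal.ofReal (kerMaj n a b z) with hI
  have hIfin : I ≠ ∞ := (integrable_kerMaj hn ha hb hab).lintegral_lt_top.ne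
  refine ⟨(2 * I).toNNReal, fun x hx => ?_⟩
  rw [ENNReal.coe_toNNReal (by finiteness)]
  set t := ‖x‖ with ht
  have ht0 : 0 < t := norm_pos_iff.mpr hx
  set e := t⁻¹ • x with he
  have hx' : x = t • e := by rw [he, smul_smul, mul_inv_cancel₀ ht0.ne', one_smul]
  have he1 : ‖e‖ = 1 := by
    rw [he, norm_smul, Real.norm_of_nonneg (by positivity), ← ht, inv_mul_cancel₀ ht0.ne']
  have hpt (z : Fin n → ℝ) :
      ENNReal.ofReal (‖x - t • z‖ ^ (-a)) * ENNReal.ofReal (‖t • z‖ ^ (-b)) =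
        ENNReal.ofReal (t ^ (-(a + b))) *
          ENNReal.ofReal (‖e - z‖ ^ (-a) * ‖z‖ ^ (-b)) := by
    rw [hx', ← smul_sub, norm_smul, norm_smul, Real.norm_of_nonneg ht0.le,
      ← ENNReal.ofReal_mul (by positivity), ← ENNReal.ofReal_mul (by positivity),
      Real.mul_rpow ht0.le (norm_nonneg _), Real.mul_rpow ht0.le (norm_nonneg _),
      neg_add, Real.rpow_add ht0]
    congr 1; ring
  have hmaj : Measurable fun z => ENNReal.ofReal (kerMaj n a b z) := by
    unfold kerMaj
    have hm (c : ℝ) : Measurable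
        ((Metric.ball (0 : Fin n → ℝ) 1).indicator (fun z => ‖z‖ ^ (-c))) :=
      Measurable.indicator (by fun_prop) Metric.isOpen_ball.measurableSet
    have hma := hm a
    have hmb := hm b
    fun_prop
  rw [lintegral_comp_smul_pi ht0 (by fun_prop)]
  simp_rw [hpt]
  rw [lintegral_const_mul _ (by fun_prop), ← mul_assoc, ← ENNReal.ofReal_mul (by positivity),
    ← Real.rpow_natCast, ← Real.rpow_add ht0, ← sub_eq_add_neg, mul_comm]
  gcongr
  calc ∫⁻ z, ENNReal.ofReal (‖e - z‖ ^ (-a) * ‖z‖ ^ (-b))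
      ≤ ∫⁻ z, (ENNReal.ofReal (kerMaj n a b z) + ENNReal.ofReal (kerMaj n a b (e - z))) := by
        refine lintegral_mono fun z => ?_
        rw [← ENNReal.ofReal_add (kerMaj_nonneg ..) (kerMaj_nonneg ..)]
        exact ENNReal.ofReal_le_ofReal (kernel_le ha0 hb0 he1 z)
    _ = 2 * I := by
        rw [lintegral_add_left hmaj,
          lintegral_sub_left_eq_self (fun z => ENNReal.ofReal (kerMaj n a b z)) e, two_mul]

/-! ### Comparison of norms and Hölder's inequality -/

lemma measurable_rnorm {n : ℕ} : Measurable (rnorm : (Fin n → ℝ) → ℝ) := by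
  unfold rnorm; fun_prop

lemma norm_le_rnorm {n : ℕ} (x : Fin n → ℝ) : ‖x‖ ≤ rnorm x := by
  refine (pi_norm_le_iff_of_nonneg (Real.sqrt_nonneg _)).mpr fun i => ?_
  refine Real.le_sqrt_of_sq_le ?_
  rw [Real.norm_eq_abs, sq_abs]
  exact Finset.single_le_sum (f := fun i => x i ^ 2) (fun i _ => sq_nonneg _) (Finset.mem_univ i)

lemma rnorm_le {n : ℕ} (x : Fin n → ℝ) : rnorm x ≤ Real.sqrt n * ‖x‖ := by
  unfold rnorm
  rw [← Real.sqrt_sq (norm_nonneg x), ← Real.sqrt_mul (by positivity)]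
  refine Real.sqrt_le_sqrt ?_
  calc ∑ i, x i ^ 2 ≤ ∑ _i : Fin n, ‖x‖ ^ 2 := by
        refine Finset.sum_le_sum fun i _ => ?_
        rw [← sq_abs, ← Real.norm_eq_abs]
        gcongr
        exact norm_le_pi_norm x i
    _ = n * ‖x‖ ^ 2 := by simp

/-- A uniform description of the weighted norms, finite and infinite exponents alike: the weighted
function is dominated by `c * φ ^ (1/q)`, and its norm is `c * (∫ φ) ^ (1/q)`. For `q = ∞` this
uses `φ = 0` and `0 ^ 0 = 1`. -/
lemma exists_factor {n : ℕ} {q : ℝ≥0∞} (hq : 1 ≤ q) (s : ℝ) {f : (Fin n → ℝ) → ℝ≥0∞}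
    (hf : Measurable f) :
    ∃ (c : ℝ≥0∞) (φ : (Fin n → ℝ) → ℝ≥0∞), Measurable φ ∧
      (∀ᵐ x, f x * ENNReal.ofReal (rnorm x ^ s) ≤ c * φ x ^ iv q) ∧
      c * (∫⁻ x, φ x) ^ iv q = Pns n q s f := by
  have hr : Measurable (rnorm : (Fin n → ℝ) → ℝ) := measurable_rnorm
  by_cases h : q = ∞
  · subst h
    refine ⟨Pns n ∞ s f, 0, measurable_const, ?_, by simp [iv]⟩
    simp only [Pns, iv, if_true, ENNReal.inv_top, ENNReal.toReal_zero, ENNReal.rpow_zero, mul_one]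
    exact ENNReal.ae_le_essSup _
  · have hq0 : q.toReal ≠ 0 := (ENNReal.toReal_pos (by positivity) h).ne'
    refine ⟨1, fun x => (f x * ENNReal.ofReal (rnorm x ^ s)) ^ q.toReal, by fun_prop, ?_, ?_⟩
    · refine Filter.Eventually.of_forall fun x => ?_
      rw [one_mul, iv, ENNReal.toReal_inv, ← ENNReal.rpow_mul, mul_inv_cancel₀ hq0,
        ENNReal.rpow_one]
    · rw [one_mul, Pns, if_neg h, iv, ENNReal.toReal_inv, one_div]

lemma holder_three {n : ℕ} {A B D : (Fin n → ℝ) → ℝ≥0∞} (hA : Measurable A) (hB : Measurable B)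
    (hD : Measurable D) {u v w : ℝ} (hu : 0 ≤ u) (hv : 0 ≤ v) (hw : 0 ≤ w) (h : u + v + w = 1) :
    ∫⁻ y, A y ^ u * B y ^ v * D y ^ w ≤
      (∫⁻ y, A y) ^ u * (∫⁻ y, B y) ^ v * (∫⁻ y, D y) ^ w := by
  have := ENNReal.lintegral_prod_norm_pow_le (μ := (volume : Measure (Fin n → ℝ)))
    (Finset.univ : Finset (Fin 3)) (f := ![A, B, D]) (p := ![u, v, w])
    (by intro i _; fin_cases i <;> simp <;> fun_prop)
    (by simpa [Fin.sum_univ_three] using h)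
    (by intro i _; fin_cases i <;> simpa)
  simpa [Fin.prod_univ_three] using this

/-- Removing the weight: off the origin, `f` is at most its weighted version times a negative power
of the sup norm, since the sup norm is at most `rnorm`. -/
lemma le_weighted {n : ℕ} {σ : ℝ} (hσ : 0 ≤ σ) (f : (Fin n → ℝ) → ℝ≥0∞) {z : Fin n → ℝ}
    (hz : z ≠ 0) :
    f z ≤ f z * ENNReal.ofReal (rnorm z ^ σ) * ENNReal.ofReal (‖z‖ ^ (-σ)) := by
  have h0 : 0 < ‖z‖ := norm_pos_iff.mpr hz
  rw [mul_assoc, ← ENNReal.ofReal_mul (Real.rpow_nonneg (h0.le.trans (norm_le_rnorm z)) _)]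
  refine le_mul_of_one_le_right' ?_
  rw [ENNReal.one_le_ofReal, Real.rpow_neg h0.le, ← div_eq_mul_inv, one_le_div (by positivity)]
  exact Real.rpow_le_rpow h0.le (norm_le_rnorm z) hσ

/-- endpoint power-weighted Young inequality
`𝕃(q₁,s₁) ∗ 𝕃(q₂,s₂) ⊂ 𝕃(∞,s)`. -/
theorem power_weighted_young_endpoint
    (n : ℕ) (hn : 1 ≤ n) (q₁ q₂ : ℝ≥0∞) (hq₁ : 1 ≤ q₁) (hq₂ : 1 ≤ q₂)
    (s s₁ s₂ : ℝ) (hs : 0 < s) (h₁ : s < s₁) (h₂ : s < s₂)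
    (hscal : 1 = iv q₁ + iv q₂ + (s₁ + s₂ - s) / (n : ℝ)) :
    ∃ C : ℝ≥0, ∀ f g : (Fin n → ℝ) → ℝ≥0∞, Measurable f → Measurable g →
      Pns n ∞ s (cconv f g) ≤ C * Pns n q₁ s₁ f * Pns n q₂ s₂ g := by
  have hn0 : (0 : ℝ) < n := by exact_mod_cast hn
  -- `w` is the reciprocal of the exponent left over for the kernel in Hölder's inequality.
  set w := (s₁ + s₂ - s) / (n : ℝ) with hw
  have hw0 : 0 < w := div_pos (by linarith) hn0
  have hnw : n * w = s₁ + s₂ - s := by rw [hw]; field_simp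
  obtain ⟨C, hC⟩ := lintegral_kernel_le hn (a := s₁ / w) (b := s₂ / w)
    (div_nonneg (by linarith) hw0.le) (div_nonneg (by linarith) hw0.le)
    (by rw [div_lt_iff₀ hw0]; linarith) (by rw [div_lt_iff₀ hw0]; linarith)
    (by rw [← add_div, lt_div_iff₀ hw0]; linarith)
  refine ⟨C ^ w * Real.toNNReal (Real.sqrt n ^ s), fun f g hf hg => ?_⟩
  obtain ⟨c, φ, hφ, hfφ, hc⟩ := exists_factor hq₁ s₁ hf
  obtain ⟨d, ψ, hψ, hgψ, hd⟩ := exists_factor hq₂ s₂ hg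
  have : NeZero n := ⟨by omega⟩
  have hae0 : ∀ᵐ y : Fin n → ℝ, y ≠ 0 := Measure.ae_ne volume 0
  rw [Pns, if_pos rfl]
  refine essSup_le_of_ae_le _ ?_
  filter_upwards [hae0] with x hx
  have hx0 : 0 < ‖x‖ := norm_pos_iff.mpr hx
  set K : (Fin n → ℝ) → ℝ≥0∞ := fun y =>
    ENNReal.ofReal (‖x - y‖ ^ (-(s₁ / w))) * ENNReal.ofReal (‖y‖ ^ (-(s₂ / w))) with hK
  have hpow (σ : ℝ) (z : Fin n → ℝ) :
      ENNReal.ofReal (‖z‖ ^ (-(σ / w))) ^ w = ENNReal.ofReal (‖z‖ ^ (-σ)) := by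
    rw [ENNReal.ofReal_rpow_of_nonneg (by positivity) hw0.le, ← Real.rpow_mul (norm_nonneg _),
      neg_mul, div_mul_cancel₀ _ hw0.ne']
  have hqmp := quasiMeasurePreserving_sub_left (volume : Measure (Fin n → ℝ)) x
  have hconv : cconv f g x ≤
      (c * d) * ((∫⁻ y, φ y) ^ iv q₁ * (∫⁻ y, ψ y) ^ iv q₂ * (∫⁻ y, K y) ^ w) := by
    calc cconv f g x
        ≤ ∫⁻ y, (c * d) * (φ (x - y) ^ iv q₁ * ψ y ^ iv q₂ * K y ^ w) := by
          refine lintegral_mono_ae ?_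
          filter_upwards [hae0, hqmp.ae hae0, hqmp.ae hfφ, hgψ] with y hy hxy h1 h2
          calc f (x - y) * g y
              ≤ (c * φ (x - y) ^ iv q₁ * ENNReal.ofReal (‖x - y‖ ^ (-s₁))) *
                (d * ψ y ^ iv q₂ * ENNReal.ofReal (‖y‖ ^ (-s₂))) := by
                refine mul_le_mul' ((le_weighted (hs.trans h₁).le f hxy).trans ?_)
                  ((le_weighted (hs.trans h₂).le g hy).trans ?_)
                · exact mul_le_mul' h1 le_rfl
                · exact mul_le_mul' h2 le_rfl
            _ = _ := by
                rw [hK]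
                simp only
                rw [ENNReal.mul_rpow_of_nonneg _ _ hw0.le, hpow, hpow]
                ring
      _ = (c * d) * ∫⁻ y, φ (x - y) ^ iv q₁ * ψ y ^ iv q₂ * K y ^ w :=
          lintegral_const_mul _ (by fun_prop)
      _ ≤ (c * d) * ((∫⁻ y, φ (x - y)) ^ iv q₁ * (∫⁻ y, ψ y) ^ iv q₂ * (∫⁻ y, K y) ^ w) := by
          gcongr
          exact holder_three (by fun_prop) hψ (by fun_prop) ENNReal.toReal_nonneg
            ENNReal.toReal_nonneg hw0.le hscal.symm
      _ = _ := by rw [lintegral_sub_left_eq_self]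
  have hker : (∫⁻ y, K y) ^ w * ENNReal.ofReal (rnorm x ^ s) ≤
      ((C ^ w * Real.toNNReal (Real.sqrt n ^ s) : ℝ≥0) : ℝ≥0∞) := by
    have hexp : (n - (s₁ / w + s₂ / w)) * w = -s := by
      have : (n - (s₁ / w + s₂ / w)) * w = n * w - s₁ - s₂ := by field_simp; ring
      rw [this, hnw]; ring
    calc (∫⁻ y, K y) ^ w * ENNReal.ofReal (rnorm x ^ s)
        ≤ (C * ENNReal.ofReal (‖x‖ ^ (n - (s₁ / w + s₂ / w)))) ^ w *
            ENNReal.ofReal ((Real.sqrt n * ‖x‖) ^ s) := by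
          have := hC x hx
          have := rnorm_le x
          have : 0 ≤ rnorm x := Real.sqrt_nonneg _
          gcongr
      _ = C ^ w * (ENNReal.ofReal (‖x‖ ^ (-s)) * ENNReal.ofReal ((Real.sqrt n * ‖x‖) ^ s)) := by
          rw [ENNReal.mul_rpow_of_nonneg _ _ hw0.le,
            ENNReal.ofReal_rpow_of_nonneg (by positivity) hw0.le,
            ← Real.rpow_mul (norm_nonneg _), hexp, mul_assoc]
      _ = _ := by
          have : ‖x‖ ^ (-s) * (Real.sqrt n ^ s * ‖x‖ ^ s) = Real.sqrt n ^ s := by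
            rw [mul_left_comm, ← Real.rpow_add hx0]; simp
          rw [← ENNReal.ofReal_mul (by positivity),
            Real.mul_rpow (Real.sqrt_nonneg _) (norm_nonneg _), this, ENNReal.coe_mul,
            ENNReal.coe_rpow_of_nonneg _ hw0.le]
          rfl
  calc cconv f g x * ENNReal.ofReal (rnorm x ^ s)
      ≤ (c * d) * ((∫⁻ y, φ y) ^ iv q₁ * (∫⁻ y, ψ y) ^ iv q₂ * (∫⁻ y, K y) ^ w) *
          ENNReal.ofReal (rnorm x ^ s) := by gcongr
    _ = ((∫⁻ y, K y) ^ w * ENNReal.ofReal (rnorm x ^ s)) *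
          (c * (∫⁻ y, φ y) ^ iv q₁) * (d * (∫⁻ y, ψ y) ^ iv q₂) := by ring
    _ ≤ _ := by rw [hc, hd]; gcongr
end
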